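/- Let m, n be positive integers, let E ⊂ ℝⁿ be finite, and let f : E → [0,∞). Then there is a constant C depending only on m and n such that the family Γ⃗_f = (Γ_f(x,M))_{x∈E,M>0} is a (C,1)-convex shape field: each Γ_f(x,M) is convex; Γ_f(x,M') ⊆ Γ_f(x,M) for 0 < M' ≤ M; and whenever 0 < δ ≤ 1, x ∈ E, M > 0, P₁, P₂ ∈ Γ_f(x,M) satisfy |∂^β(P₁−P₂)(x)| ≤ Mδ^{m−|β|} for |β| ≤ m−1, and Q₁, Q₂ ∈ 𝒫 satisfy |∂^β Q_i(x)| ≤ δ^{−|β|} for |β| ≤ m−1 (i = 1, 2) and Q₁⊙_x Q₁ + Q₂⊙_x Q₂ = 1, then Q₁⊙_x Q₁⊙_x P₁ + Q₂⊙_x Q₂⊙_x P₂ ∈ Γ_f(x, CM). -/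

import Mathlib

open scoped BigOperators

noncomputable section

abbrev Euc (n : ℕ) : Type := EuclideanSpace ℝ (Fin n)
abbrev MPoly (n : ℕ) : Type := MvPolynomial (Fin n) ℝ

/-- Partial derivative in the `i`-th coordinate direction. -/
noncomputable def pD {n : ℕ} (i : Fin n) (F : Euc n → ℝ) : Euc n → ℝ :=
  fun x => fderiv ℝ F x (EuclideanSpace.single i (1 : ℝ))

/-- The multi-index partial derivative `∂^α F`. -/
noncomputable def mD {n : ℕ} (α : Fin n → ℕ) (F : Euc n → ℝ) : Euc n → ℝ :=
  (((List.finRange n).flatMap fun i => List.replicate (α i) i)).foldr pD F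

/-- Partial derivative within a set. -/
noncomputable def pDW {n : ℕ} (s : Set (Euc n)) (i : Fin n) (F : Euc n → ℝ) : Euc n → ℝ :=
  fun x => fderivWithin ℝ F s x (EuclideanSpace.single i (1 : ℝ))

/-- Multi-index partial derivative within a set. -/
noncomputable def mDW {n : ℕ} (s : Set (Euc n)) (α : Fin n → ℕ) (F : Euc n → ℝ) : Euc n → ℝ :=
  (((List.finRange n).flatMap fun i => List.replicate (α i) i)).foldr (pDW s) F

/-- The order `|α|` of a multi-index. -/
def deg {n : ℕ} (α : Fin n → ℕ) : ℕ := ∑ i, α i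

/-- Evaluation of an `n`-variable polynomial at a point of `ℝⁿ`. -/
noncomputable def peval {n : ℕ} (P : MPoly n) (x : Euc n) : ℝ :=
  MvPolynomial.eval (fun i => x i) P

/-- `F ∈ C^m(ℝⁿ)` with `‖F‖_{C^m(ℝⁿ)} ≤ M`. -/
def CmNormLe (m n : ℕ) (F : Euc n → ℝ) (M : ℝ) : Prop :=
  ContDiff ℝ (m : ℕ∞) F ∧ ∀ α : Fin n → ℕ, deg α ≤ m → ∀ x : Euc n, |mD α F x| ≤ M

/-- `F ∈ C^{m-1,1}(ℝⁿ)` with `‖F‖_{C^{m-1,1}(ℝⁿ)} ≤ M`. -/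
def CmLipNormLe (m n : ℕ) (F : Euc n → ℝ) (M : ℝ) : Prop :=
  ContDiff ℝ ((m - 1 : ℕ) : ℕ∞) F ∧
  (∀ α : Fin n → ℕ, deg α ≤ m - 1 → ∀ x : Euc n, |mD α F x| ≤ M) ∧
  (∀ α : Fin n → ℕ, deg α = m - 1 → ∀ i : Fin n, ∀ x : Euc n, ∀ t : ℝ,
    |mD α F (x + t • EuclideanSpace.single i (1 : ℝ)) - mD α F x| ≤ M * |t|)

/-- `J_x(F) = P`, i.e. `P` is the `(m-1)`-st order Taylor polynomial of `F` at `x`. -/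
def IsJetAt (m n : ℕ) (F : Euc n → ℝ) (x : Euc n) (P : MPoly n) : Prop :=
  P.totalDegree ≤ m - 1 ∧
  ∀ α : Fin n → ℕ, deg α ≤ m - 1 → mD α (peval P) x = mD α F x

/-- `J_x^+(F) = P`, i.e. `P` is the `m`-th order Taylor polynomial of `F` at `x`. -/
def IsJetPlusAt (m n : ℕ) (F : Euc n → ℝ) (x : Euc n) (P : MPoly n) : Prop :=
  P.totalDegree ≤ m ∧
  ∀ α : Fin n → ℕ, deg α ≤ m → mD α (peval P) x = mD α F x

/-- Truncation of a polynomial: keep the monomials of total degree `≤ d`. -/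
noncomputable def truncLE {n : ℕ} (d : ℕ) (P : MPoly n) : MPoly n :=
  ∑ s ∈ P.support.filter (fun s => (s.sum fun _ e => e) ≤ d),
    MvPolynomial.monomial s (P.coeff s)

/-- Substitution `y ↦ y + v` in a polynomial. -/
noncomputable def polyShift {n : ℕ} (v : Fin n → ℝ) (P : MPoly n) : MPoly n :=
  MvPolynomial.aeval (fun i => (MvPolynomial.X i + MvPolynomial.C (v i) : MPoly n)) P

/-- The `(m-1)`-st order Taylor polynomial of a polynomial `P` at `x`. -/
noncomputable def jetTrunc (m n : ℕ) (x : Euc n) (P : MPoly n) : MPoly n :=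
  polyShift (fun i => -(x i)) (truncLE (m - 1) (polyShift (fun i => x i) P))

/-- Multiplication of `(m-1)`-jets at `x`: `P ⊙_x Q = J_x(PQ)`. -/
noncomputable def jmul (m n : ℕ) (x : Euc n) (P Q : MPoly n) : MPoly n :=
  jetTrunc m n x (P * Q)

/-- `Γ*(x,M)`. -/
def GammaStar (m n : ℕ) (x : Euc n) (M : ℝ) : Set (MPoly n) :=
  {P | ∃ F : Euc n → ℝ, CmNormLe m n F M ∧ (∀ y, 0 ≤ F y) ∧ IsJetAt m n F x P}

/-- `Γ_f(x,M)`. -/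
def GammaF (m n : ℕ) (f : Euc n → ℝ) (x : Euc n) (M : ℝ) : Set (MPoly n) :=
  {P ∈ GammaStar m n x M | peval P x = f x}

/-- `Γ'*(x,M)` (the `C^{m-1,1}` version). -/
def GammaStar' (m n : ℕ) (x : Euc n) (M : ℝ) : Set (MPoly n) :=
  {P | ∃ F : Euc n → ℝ, CmLipNormLe m n F M ∧ (∀ y, 0 ≤ F y) ∧ IsJetAt m n F x P}

/-- `Γ'_f(x,M)`. -/
def GammaF' (m n : ℕ) (f : Euc n → ℝ) (x : Euc n) (M : ℝ) : Set (MPoly n) :=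
  {P ∈ GammaStar' m n x M | peval P x = f x}

/-- `Γ₀⁺`. -/
def Gamma0plus (m n : ℕ) : Set (MPoly n) :=
  {P | P.totalDegree ≤ m ∧
    (∀ β : Fin n → ℕ, deg β ≤ m → |mD β (peval P) 0| ≤ 1) ∧
    (∀ x : Euc n, 0 ≤ peval P x + ‖x‖ ^ m) ∧
    (∀ ε : ℝ, 0 < ε → ∃ δ : ℝ, 0 < δ ∧ ∀ x : Euc n, ‖x‖ ≤ δ → 0 ≤ peval P x + ε * ‖x‖ ^ m)}

/-- `Γ̃₀'`. -/
def GammaTilde0' (m n : ℕ) : Set (MPoly n) :=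
  {P | P.totalDegree ≤ m - 1 ∧
    (∀ β : Fin n → ℕ, deg β ≤ m - 1 → |mD β (peval P) 0| ≤ 1) ∧
    ∀ x : Euc n, 0 ≤ peval P x + ‖x‖ ^ m}

/-- The closed axis-parallel cube with center `c` and sidelength `δ`. -/
def cube {n : ℕ} (c : Euc n) (δ : ℝ) : Set (Euc n) :=
  {y | ∀ i, |y i - c i| ≤ δ / 2}

/-- `F ∈ C^{m-1,1}(Q)` with `‖F‖_{C^{m-1,1}(Q)} ≤ M`, for the cube `Q` of center `c`,
sidelength `δ`. -/
def CmLipOnCubeLe (m n : ℕ) (c : Euc n) (δ : ℝ) (F : Euc n → ℝ) (M : ℝ) : Prop :=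
  ContDiffOn ℝ ((m - 1 : ℕ) : ℕ∞) F (cube c δ) ∧
  (∀ α : Fin n → ℕ, deg α ≤ m - 1 → ∀ x ∈ cube c δ, |mDW (cube c δ) α F x| ≤ M) ∧
  (∀ α : Fin n → ℕ, deg α = m - 1 → ∀ i : Fin n, ∀ x ∈ cube c δ, ∀ t : ℝ,
    x + t • EuclideanSpace.single i (1 : ℝ) ∈ cube c δ →
    |mDW (cube c δ) α F (x + t • EuclideanSpace.single i (1 : ℝ)) - mDW (cube c δ) α F x|
      ≤ M * |t|)

/-!
Suppose `F₁`, `F₂ ≥ 0` have jets `P₁`, `P₂` at `x`. As `Q₁(x)² + Q₂(x)² = 1`, we may assume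
`Q₁(x)² ≤ 1/2`, so that `|Q₁| ≤ 1` on `B(x, cδ)` for a small constant `c`. Let `χ` be a cutoff
supported there and equal to `1` near `x`, and put `θ = χ Q₁²`. Then `0 ≤ θ ≤ 1`, so
`F = θ F₁ + (1 - θ) F₂` is nonnegative. Near `x` it equals `Q₁² F₁ + (1 - Q₁²) F₂`, whose jet is
`Q₁ ⊙ Q₁ ⊙ P₁ + Q₂ ⊙ Q₂ ⊙ P₂`. Only the size of `F = F₂ + θ (F₁ - F₂)` needs care: by Taylor's
theorem `D^j (F₁ - F₂) = O(M δ^{m-j})` on `B(x, δ)`, which compensates `D^j θ = O(δ^{-j})` in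
Leibniz's rule.
-/

open Filter Topology

section NormedSpace

variable {E : Type*} [NormedAddCommGroup E] [NormedSpace ℝ E]

/-! ### Jets -/

section Jets

variable {V : Type*} [NormedAddCommGroup V] [NormedSpace ℝ V] {m : ℕ}
  {f f' g g' h : E → V} {x : E}

/-- Equality of `(m-1)`-jets at `x`: all derivatives of order `< m` agree there. -/
def JetEq (m : ℕ) (f g : E → V) (x : E) : Prop :=
  ∀ j < m, iteratedFDeriv ℝ j f x = iteratedFDeriv ℝ j g x

namespace JetEq

theorem symm (hfg : JetEq m f g x) : JetEq m g f x := fun j hj => (hfg j hj).symm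

theorem trans (hfg : JetEq m f g x) (hgh : JetEq m g h x) : JetEq m f h x :=
  fun j hj => (hfg j hj).trans (hgh j hj)

theorem of_eventuallyEq (hfg : f =ᶠ[𝓝 x] g) : JetEq m f g x :=
  fun j _ => (hfg.iteratedFDeriv ℝ j).self_of_nhds

theorem apply_eq (hm : 0 < m) (hfg : JetEq m f g x) : f x = g x := by
  simpa using congrArg (fun φ => φ 0) (hfg 0 hm)

theorem comp_sub {a : E} (hfg : JetEq m f g (x - a)) :
    JetEq m (fun z => f (z - a)) (fun z => g (z - a)) x := fun j hj => by
  rw [iteratedFDeriv_comp_sub, iteratedFDeriv_comp_sub, hfg j hj]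

theorem add (hff' : JetEq m f f' x) (hgg' : JetEq m g g' x) (hf : ContDiff ℝ m f)
    (hf' : ContDiff ℝ m f') (hg : ContDiff ℝ m g) (hg' : ContDiff ℝ m g') :
    JetEq m (f + g) (f' + g') x := fun j hj => by
  have hjm : (j : WithTop ℕ∞) ≤ m := by exact_mod_cast hj.le
  rw [iteratedFDeriv_add_apply (hf.of_le hjm).contDiffAt (hg.of_le hjm).contDiffAt,
    iteratedFDeriv_add_apply (hf'.of_le hjm).contDiffAt (hg'.of_le hjm).contDiffAt,
    hff' j hj, hgg' j hj]

theorem const_smul (a : ℝ) (hff' : JetEq m f f' x) (hf : ContDiff ℝ m f)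
    (hf' : ContDiff ℝ m f') : JetEq m (a • f) (a • f') x := fun j hj => by
  have hjm : (j : WithTop ℕ∞) ≤ m := by exact_mod_cast hj.le
  rw [iteratedFDeriv_const_smul_apply (hf.of_le hjm).contDiffAt,
    iteratedFDeriv_const_smul_apply (hf'.of_le hjm).contDiffAt, hff' j hj]

theorem sub (hff' : JetEq m f f' x) (hgg' : JetEq m g g' x) (hf : ContDiff ℝ m f)
    (hf' : ContDiff ℝ m f') (hg : ContDiff ℝ m g) (hg' : ContDiff ℝ m g') :
    JetEq m (f - g) (f' - g') x := by
  simpa only [sub_eq_add_neg, neg_one_smul] using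
    hff'.add (hgg'.const_smul (-1) hg hg') hf hf' (hg.const_smul (-1)) (hg'.const_smul (-1))

end JetEq

theorem jetEq_iff_sub (hf : ContDiff ℝ m f) (hg : ContDiff ℝ m g) :
    JetEq m f g x ↔ ∀ j < m, iteratedFDeriv ℝ j (f - g) x = 0 := by
  refine forall₂_congr fun j hj => ?_
  have hjm : (j : WithTop ℕ∞) ≤ m := by exact_mod_cast hj.le
  rw [iteratedFDeriv_sub_apply (hf.of_le hjm).contDiffAt (hg.of_le hjm).contDiffAt, sub_eq_zero]

variable {A : Type*} [NormedRing A] [NormedAlgebra ℝ A]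

theorem iteratedFDeriv_mul_eq_zero {f g : E → A} {j : ℕ} (hf : ContDiff ℝ j f)
    (hg : ContDiff ℝ j g)
    (hfg : ∀ i ≤ j, iteratedFDeriv ℝ i f x = 0 ∨ iteratedFDeriv ℝ (j - i) g x = 0) :
    iteratedFDeriv ℝ j (f * g) x = 0 := by
  refine norm_le_zero_iff.mp ((norm_iteratedFDeriv_mul_le hf hg x le_rfl).trans_eq ?_)
  refine Finset.sum_eq_zero fun i hi => ?_
  rcases hfg i (Nat.lt_succ_iff.mp (Finset.mem_range.mp hi)) with h | h <;> simp [h]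

theorem JetEq.mul {f f' g g' : E → A} (hff' : JetEq m f f' x) (hgg' : JetEq m g g' x)
    (hf : ContDiff ℝ m f) (hf' : ContDiff ℝ m f') (hg : ContDiff ℝ m g)
    (hg' : ContDiff ℝ m g') : JetEq m (f * g) (f' * g') x := by
  have hleft : JetEq m (f * g) (f' * g) x := by
    refine (jetEq_iff_sub (f := f * g) (g := f' * g) (hf.mul hg) (hf'.mul hg)).mpr fun j hj => ?_
    have hjm : (j : WithTop ℕ∞) ≤ m := by exact_mod_cast hj.le
    rw [← sub_mul]
    exact iteratedFDeriv_mul_eq_zero ((hf.sub hf').of_le hjm) (hg.of_le hjm)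
      fun i hi => .inl ((jetEq_iff_sub hf hf').mp hff' i (hi.trans_lt hj))
  have hright : JetEq m (f' * g) (f' * g') x := by
    refine (jetEq_iff_sub (f := f' * g) (g := f' * g') (hf'.mul hg) (hf'.mul hg')).mpr
      fun j hj => ?_
    have hjm : (j : WithTop ℕ∞) ≤ m := by exact_mod_cast hj.le
    rw [← mul_sub]
    exact iteratedFDeriv_mul_eq_zero (hf'.of_le hjm) ((hg.sub hg').of_le hjm)
      fun i _ => .inr ((jetEq_iff_sub hg hg').mp hgg' (j - i) ((j.sub_le i).trans_lt hj))
  exact hleft.trans hright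

end Jets

/-! ### Derivative bounds at a scale -/

/-- The bounds `‖D^j f(y)‖ ≤ B δ^{-j}`, `j ≤ m`, natural for a function of size `B` that varies
at scale `δ`. -/
def ScaledCmBound {V : Type*} [NormedAddCommGroup V] [NormedSpace ℝ V] (m : ℕ) (δ B : ℝ)
    (f : E → V) (y : E) : Prop :=
  ∀ j ≤ m, ‖iteratedFDeriv ℝ j f y‖ ≤ B * δ⁻¹ ^ j

namespace ScaledCmBound

variable {V : Type*} [NormedAddCommGroup V] [NormedSpace ℝ V] {m : ℕ} {δ B : ℝ} {f : E → V}
  {x y : E}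

theorem norm_le (h : ScaledCmBound m δ B f y) : ‖f y‖ ≤ B := by
  simpa using h 0 m.zero_le

theorem nonneg (h : ScaledCmBound m δ B f y) : 0 ≤ B :=
  (norm_nonneg _).trans h.norm_le

theorem of_notMem_tsupport (hδ : 0 ≤ δ) (hB : 0 ≤ B) (hy : y ∉ tsupport f) :
    ScaledCmBound m δ B f y := fun j _ => by
  have hzero : iteratedFDeriv ℝ j f y = 0 :=
    Function.notMem_support.mp fun h => hy (support_iteratedFDeriv_subset j h)
  rw [hzero, norm_zero]
  positivity

theorem of_smaller_scale {c : ℝ} (hc : 0 < c) (hc1 : c ≤ 1) (hδ : 0 ≤ δ)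
    (h : ScaledCmBound m (c * δ) B f y) : ScaledCmBound m δ (B * c⁻¹ ^ m) f y := fun j hj =>
  calc ‖iteratedFDeriv ℝ j f y‖ ≤ B * (c * δ)⁻¹ ^ j := h j hj
    _ = B * c⁻¹ ^ j * δ⁻¹ ^ j := by rw [mul_inv, mul_pow, mul_assoc]
    _ ≤ B * c⁻¹ ^ m * δ⁻¹ ^ j := by
      have := h.nonneg
      gcongr
      exact (one_le_inv₀ hc).mpr hc1

theorem mul {A : Type*} [NormedRing A] [NormedAlgebra ℝ A] {a b : ℝ} {f g : E → A}
    (hδ : 0 ≤ δ) (hf : ContDiff ℝ m f) (hg : ContDiff ℝ m g) (hfa : ScaledCmBound m δ a f y)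
    (hgb : ScaledCmBound m δ b g y) : ScaledCmBound m δ (2 ^ m * a * b) (f * g) y :=
  fun j hj => by
  have ha := hfa.nonneg
  have hb := hgb.nonneg
  calc ‖iteratedFDeriv ℝ j (f * g) y‖
      ≤ ∑ i ∈ Finset.range (j + 1), (j.choose i : ℝ) * ‖iteratedFDeriv ℝ i f y‖ *
          ‖iteratedFDeriv ℝ (j - i) g y‖ :=
        norm_iteratedFDeriv_mul_le hf hg y (by exact_mod_cast hj)
    _ ≤ ∑ i ∈ Finset.range (j + 1), (j.choose i : ℝ) * (a * δ⁻¹ ^ i) * (b * δ⁻¹ ^ (j - i)) := by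
        gcongr with i hi
        · exact hfa i (by grind)
        · exact hgb (j - i) (by omega)
    _ = ∑ i ∈ Finset.range (j + 1), (j.choose i : ℝ) * (a * b * δ⁻¹ ^ j) := by
        refine Finset.sum_congr rfl fun i hi => ?_
        rw [← Nat.add_sub_of_le (Nat.lt_succ_iff.mp (Finset.mem_range.mp hi)), pow_add,
          Nat.add_sub_cancel_left]
        ring
    _ = 2 ^ j * (a * b * δ⁻¹ ^ j) := by
        rw [← Finset.sum_mul]
        exact_mod_cast congrArg (fun k : ℕ => (k : ℝ) * (a * b * δ⁻¹ ^ j))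
          (Nat.sum_range_choose j)
    _ ≤ 2 ^ m * (a * b * δ⁻¹ ^ j) := by gcongr; norm_num
    _ = 2 ^ m * a * b * δ⁻¹ ^ j := by ring

theorem of_center (hδ : 0 < δ) (hf : ContDiff ℝ m f)
    (hcenter : ∀ j < m, ‖iteratedFDeriv ℝ j f x‖ ≤ B * δ⁻¹ ^ j)
    (htop : ∀ y ∈ Metric.closedBall x δ, ‖iteratedFDeriv ℝ m f y‖ ≤ B * δ⁻¹ ^ m)
    (hy : y ∈ Metric.closedBall x δ) : ScaledCmBound m δ (B * (m + 1)) f y := by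
  have hx : x ∈ Metric.closedBall x δ := Metric.mem_closedBall_self hδ.le
  have hB : 0 ≤ B := nonneg_of_mul_nonneg_left ((norm_nonneg _).trans (htop x hx)) (by positivity)
  suffices key : ∀ i j : ℕ, j + i = m → ∀ y ∈ Metric.closedBall x δ,
      ‖iteratedFDeriv ℝ j f y‖ ≤ B * (i + 1) * δ⁻¹ ^ j by
    intro j hj
    refine (key (m - j) j (Nat.add_sub_of_le hj) y hy).trans ?_
    gcongr
    exact Nat.sub_le m j
  intro i
  induction i with
  | zero =>
    rintro j rfl y hy
    simpa using htop y hy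
  | succ i ih =>
    intro j hj y hy
    have hderiv := ih (j + 1) (by omega)
    have hmean : ‖iteratedFDeriv ℝ j f y - iteratedFDeriv ℝ j f x‖ ≤
        B * (i + 1) * δ⁻¹ ^ (j + 1) * ‖y - x‖ :=
      (convex_closedBall x δ).norm_image_sub_le_of_norm_fderiv_le (𝕜 := ℝ)
        (fun z _ => hf.differentiable_iteratedFDeriv (by norm_cast; omega) z)
        (fun z hz => by rw [norm_fderiv_iteratedFDeriv]; exact hderiv z hz) hx hy
    calc ‖iteratedFDeriv ℝ j f y‖
        ≤ ‖iteratedFDeriv ℝ j f x‖ + ‖iteratedFDeriv ℝ j f y - iteratedFDeriv ℝ j f x‖ :=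
          norm_le_norm_add_norm_sub' _ _
      _ ≤ B * δ⁻¹ ^ j + B * (i + 1) * δ⁻¹ ^ (j + 1) * δ := by
          gcongr
          · exact hcenter j (by omega)
          · exact hmean.trans (by gcongr; rwa [← mem_closedBall_iff_norm])
      _ = B * ((i + 1 : ℕ) + 1) * δ⁻¹ ^ j := by
          push_cast
          rw [pow_succ]
          field_simp
          ring

theorem norm_sub_le {r : ℝ} (hr : r ≤ 1) (hδ : 0 < δ) (hm : 0 < m) (hf : ContDiff ℝ m f)
    (h : ∀ z ∈ Metric.closedBall x δ, ScaledCmBound m δ B f z)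
    (hy : y ∈ Metric.closedBall x (r * δ)) : ‖f y - f x‖ ≤ B * r := by
  have hx : x ∈ Metric.closedBall x δ := Metric.mem_closedBall_self hδ.le
  have hB := (h x hx).nonneg
  have hyδ : y ∈ Metric.closedBall x δ :=
    Metric.closedBall_subset_closedBall (mul_le_of_le_one_left hδ.le hr) hy
  calc ‖f y - f x‖ ≤ B * δ⁻¹ * ‖y - x‖ :=
        (convex_closedBall x δ).norm_image_sub_le_of_norm_fderiv_le (𝕜 := ℝ)
          (fun z _ => hf.differentiable (by exact_mod_cast hm.ne') z)
          (fun z hz => by simpa using h z hz 1 hm) hx hyδ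
    _ ≤ B * δ⁻¹ * (r * δ) := by gcongr; rwa [← mem_closedBall_iff_norm]
    _ = B * r := by field_simp

end ScaledCmBound

/-! ### Cutoff weights -/

/-- A `C^m` function with values in `[0, 1]`, supported in the closed ball of radius `δ` about
`x`, whose `j`-th derivative is at most `K δ^{-j}`: a weight for gluing functions at scale `δ`. -/
structure IsScaledCutoff (m : ℕ) (δ K : ℝ) (x : E) (θ : E → ℝ) : Prop where
  contDiff : ContDiff ℝ m θ
  mem_Icc : ∀ y, θ y ∈ Set.Icc 0 1
  tsupport_subset : tsupport θ ⊆ Metric.closedBall x δ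
  bound : ∀ y, ScaledCmBound m δ K θ y

namespace IsScaledCutoff

variable {m : ℕ} {δ K : ℝ} {x : E} {θ : E → ℝ}

theorem of_smaller_scale {c : ℝ} (hc : 0 < c) (hc1 : c ≤ 1) (hδ : 0 ≤ δ)
    (hθ : IsScaledCutoff m (c * δ) K x θ) : IsScaledCutoff m δ (K * c⁻¹ ^ m) x θ where
  contDiff := hθ.contDiff
  mem_Icc := hθ.mem_Icc
  tsupport_subset := hθ.tsupport_subset.trans
    (Metric.closedBall_subset_closedBall (mul_le_of_le_one_left hδ hc1))
  bound y := (hθ.bound y).of_smaller_scale hc hc1 hδ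

theorem scaledCmBound_mul {B : ℝ} {g : E → ℝ} (hδ : 0 ≤ δ) (hθ : IsScaledCutoff m δ K x θ)
    (hg : ContDiff ℝ m g) (hgB : ∀ y ∈ Metric.closedBall x δ, ScaledCmBound m δ B g y) (y : E) :
    ScaledCmBound m δ (2 ^ m * K * B) (θ * g) y := by
  by_cases hy : y ∈ tsupport θ
  · exact (hθ.bound y).mul hδ hθ.contDiff hg (hgB y (hθ.tsupport_subset hy))
  · have hK := (hθ.bound x).nonneg
    have hB := (hgB x (Metric.mem_closedBall_self hδ)).nonneg
    exact .of_notMem_tsupport hδ (by positivity) fun h => hy (tsupport_mul_subset_left h)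

theorem norm_iteratedFDeriv_mul_le {B : ℝ} {g : E → ℝ} (hδ : 0 < δ) (hδ1 : δ ≤ 1)
    (hθ : IsScaledCutoff m δ K x θ) (hg : ContDiff ℝ m g)
    (hgB : ∀ y ∈ Metric.closedBall x δ, ScaledCmBound m δ (B * δ ^ m) g y) {j : ℕ} (hj : j ≤ m)
    (y : E) : ‖iteratedFDeriv ℝ j (θ * g) y‖ ≤ 2 ^ m * K * B := by
  have hK := (hθ.bound x).nonneg
  have hB : 0 ≤ B := nonneg_of_mul_nonneg_left
    (hgB x (Metric.mem_closedBall_self hδ.le)).nonneg (by positivity)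
  calc ‖iteratedFDeriv ℝ j (θ * g) y‖ ≤ 2 ^ m * K * (B * δ ^ m) * δ⁻¹ ^ j :=
        hθ.scaledCmBound_mul hδ.le hg hgB y j hj
    _ = 2 ^ m * K * B * (δ ^ m * δ⁻¹ ^ j) := by ring
    _ = 2 ^ m * K * B * δ ^ (m - j) := by rw [inv_pow, pow_sub₀ δ hδ.ne' hj]
    _ ≤ 2 ^ m * K * B := mul_le_of_le_one_right (by positivity) (pow_le_one₀ hδ.le hδ1)

end IsScaledCutoff

theorem iteratedFDeriv_comp_smul_sub {V : Type*} [NormedAddCommGroup V] [NormedSpace ℝ V]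
    {f : E → V} {j : ℕ} (hf : ContDiff ℝ j f) (a : ℝ) (x y : E) :
    iteratedFDeriv ℝ j (fun z => f (a • (z - x))) y =
      a ^ j • iteratedFDeriv ℝ j f (a • (y - x)) := by
  rw [iteratedFDeriv_comp_sub (f := fun z => f (a • z)) j x y, iteratedFDeriv_comp_const_smul a hf]

end NormedSpace

theorem exists_isScaledCutoff_eventuallyEq_one (E : Type*) [NormedAddCommGroup E]
    [NormedSpace ℝ E] [FiniteDimensional ℝ E] (m : ℕ) :
    ∃ K : ℝ, ∀ (x : E) (δ : ℝ), 0 < δ →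
      ∃ χ : E → ℝ, IsScaledCutoff m δ K x χ ∧ χ =ᶠ[𝓝 x] 1 := by
  let χ₀ : ContDiffBump (0 : E) := ⟨1 / 2, 1, by norm_num, by norm_num⟩
  have hχ₀ (j : ℕ) : ContDiff ℝ j χ₀ := χ₀.contDiff
  have hbound (j : ℕ) : ∃ K : ℝ, ∀ z, ‖iteratedFDeriv ℝ j χ₀ z‖ ≤ K :=
    (χ₀.hasCompactSupport.iteratedFDeriv (𝕜 := ℝ) j).exists_bound_of_continuous
      ((hχ₀ j).continuous_iteratedFDeriv le_rfl)
  choose K hK using hbound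
  refine ⟨∑ j ∈ Finset.range (m + 1), K j, fun x δ hδ => ?_⟩
  have hscale : ContDiff ℝ m fun y : E => δ⁻¹ • (y - x) :=
    (contDiff_id.sub contDiff_const).const_smul δ⁻¹
  have hnorm (y : E) : ‖δ⁻¹ • (y - x)‖ = ‖y - x‖ / δ := by
    rw [norm_smul, norm_inv, Real.norm_of_nonneg hδ.le, inv_mul_eq_div]
  refine ⟨fun y => χ₀ (δ⁻¹ • (y - x)), ⟨(hχ₀ m).comp hscale, fun y => ⟨χ₀.nonneg, χ₀.le_one⟩,
    closure_minimal (fun y hy => ?_) Metric.isClosed_closedBall, fun y j hj => ?_⟩, ?_⟩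
  · have hmem : δ⁻¹ • (y - x) ∈ Metric.ball 0 1 := χ₀.support_eq ▸ hy
    rw [mem_ball_zero_iff, hnorm, div_lt_one hδ] at hmem
    exact mem_closedBall_iff_norm.mpr hmem.le
  · have hKj : K j ≤ ∑ i ∈ Finset.range (m + 1), K i :=
      Finset.single_le_sum (fun i _ => (norm_nonneg _).trans (hK i 0))
        (Finset.mem_range.mpr (Nat.lt_succ_of_le hj))
    rw [iteratedFDeriv_comp_smul_sub (hχ₀ j), norm_smul, norm_pow,
      Real.norm_of_nonneg (by positivity), mul_comm]
    gcongr
    exact (hK j _).trans hKj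
  · have hcont : Tendsto (fun y => δ⁻¹ • (y - x)) (𝓝 x) (𝓝 0) :=
      hscale.continuous.tendsto' _ _ (by simp)
    exact hcont.eventually χ₀.eventuallyEq_one

theorem exists_isScaledCutoff_jetEq_sq (E : Type*) [NormedAddCommGroup E]
    [NormedSpace ℝ E] [FiniteDimensional ℝ E] {m : ℕ} (hm : 0 < m) {A : ℝ} (hA : 0 ≤ A) :
    ∃ K : ℝ, ∀ (x : E) (δ : ℝ), 0 < δ → ∀ q : E → ℝ, ContDiff ℝ m q →
      (∀ y ∈ Metric.closedBall x δ, ScaledCmBound m δ A q y) → q x * q x ≤ 1 / 2 →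
      ∃ θ : E → ℝ, IsScaledCutoff m δ K x θ ∧ JetEq m θ (q * q) x := by
  obtain ⟨K, hK⟩ := exists_isScaledCutoff_eventuallyEq_one E m
  set c : ℝ := 1 / (4 * (A + 1)) with hc
  have hc0 : 0 < c := by positivity
  have hc1 : c ≤ 1 := by rw [hc, div_le_one (by positivity)]; linarith
  have hAc : A * c ≤ 1 / 4 := by rw [hc]; field_simp; linarith
  refine ⟨2 ^ m * (K * c⁻¹ ^ m) * (2 ^ m * A * A), fun x δ hδ q hq hqA hqx => ?_⟩
  obtain ⟨χ, hχ, hχ1⟩ := hK x (c * δ) (by positivity)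
  have hχδ := hχ.of_smaller_scale hc0 hc1 hδ.le
  have hq_le_one {y : E} (hy : y ∈ tsupport χ) : q y * q y ≤ 1 := by
    have hosc : |q y - q x| ≤ 1 / 4 :=
      (ScaledCmBound.norm_sub_le hc1 hδ hm hq hqA (hχ.tsupport_subset hy)).trans hAc
    have hqx' : |q x| ≤ 3 / 4 := abs_le_of_sq_le_sq (by linarith) (by norm_num)
    have hqy : |q y| ≤ 1 := by linarith [abs_sub_abs_le_abs_sub (q y) (q x)]
    rw [← abs_mul_abs_self]
    exact mul_le_one₀ hqy (abs_nonneg _) hqy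
  refine ⟨χ * (q * q), ⟨hχ.contDiff.mul (hq.mul hq), fun y => ⟨?_, ?_⟩, ?_, ?_⟩, ?_⟩
  · exact mul_nonneg (hχ.mem_Icc y).1 (mul_self_nonneg _)
  · by_cases hy : y ∈ tsupport χ
    · exact mul_le_one₀ (hχ.mem_Icc y).2 (mul_self_nonneg _) (hq_le_one hy)
    · simp [image_eq_zero_of_notMem_tsupport hy]
  · exact tsupport_mul_subset_left.trans hχδ.tsupport_subset
  · exact hχδ.scaledCmBound_mul hδ.le (hq.mul hq)
      fun y hy => (hqA y hy).mul hδ.le hq hq (hqA y hy)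
  · refine .of_eventuallyEq ?_
    filter_upwards [hχ1] with y hy
    simp [hy]

/-! ### Multi-index derivatives -/

theorem opNorm_le_sum_norm_apply_orthonormalBasis {E V ι κ : Type*} [NormedAddCommGroup E]
    [InnerProductSpace ℝ E] [NormedAddCommGroup V] [NormedSpace ℝ V] [Fintype ι] [DecidableEq ι]
    [Fintype κ] (b : OrthonormalBasis κ ℝ E) (φ : ContinuousMultilinearMap ℝ (fun _ : ι => E) V) :
    ‖φ‖ ≤ ∑ r : ι → κ, ‖φ fun i => b (r i)‖ := by
  refine φ.opNorm_le_bound (by positivity) fun v => ?_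
  have hexpand : φ v = ∑ r : ι → κ, (∏ i, inner ℝ (b (r i)) (v i)) • φ fun i => b (r i) := by
    conv_lhs => rw [show v = fun i => ∑ k, inner ℝ (b k) (v i) • b k from
      funext fun i => (b.sum_repr' (v i)).symm]
    rw [φ.map_sum]
    exact Finset.sum_congr rfl fun r _ => φ.map_smul_univ _ _
  rw [hexpand, Finset.sum_mul]
  refine norm_sum_le_of_le _ fun r _ => ?_
  rw [norm_smul, norm_prod, mul_comm]
  gcongr with i
  simpa using norm_inner_le_norm (𝕜 := ℝ) (b (r i)) (v i)

section MultiIndex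

variable {n : ℕ}

theorem contDiff_pD {k : ℕ} {F : Euc n → ℝ} (hF : ContDiff ℝ (k + 1 : ℕ) F) (i : Fin n) :
    ContDiff ℝ k (pD i F) :=
  (hF.fderiv_right (m := (k : ℕ)) (by norm_cast)).clm_apply contDiff_const

theorem contDiff_foldr_pD (l : List (Fin n)) {k : ℕ} {F : Euc n → ℝ}
    (hF : ContDiff ℝ (k + l.length : ℕ) F) : ContDiff ℝ k (l.foldr pD F) := by
  induction l generalizing k with
  | nil => simpa using hF
  | cons i l ih =>
    refine contDiff_pD (ih ?_) i
    rwa [List.length_cons, ← add_assoc, add_right_comm] at hF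

theorem pD_comm {F : Euc n → ℝ} (hF : ContDiff ℝ (2 : ℕ) F) (i j : Fin n) :
    pD i (pD j F) = pD j (pD i F) := by
  have hderiv : Differentiable ℝ (fderiv ℝ F) :=
    (hF.fderiv_right (m := 1) (by norm_num)).differentiable (by norm_num)
  have hpD (a b : Fin n) (x : Euc n) : pD a (pD b F) x =
      fderiv ℝ (fderiv ℝ F) x (EuclideanSpace.single a 1) (EuclideanSpace.single b 1) := by
    change fderiv ℝ (fun y => fderiv ℝ F y (EuclideanSpace.single b 1)) x _ = _
    rw [fderiv_clm_apply (hderiv x) (differentiableAt_const _)]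
    simp
  funext x
  rw [hpD, hpD]
  exact hF.contDiffAt.isSymmSndFDerivAt (by simp) _ _

theorem foldr_pD_perm {l₁ l₂ : List (Fin n)} (h : l₁.Perm l₂) {F : Euc n → ℝ}
    (hF : ContDiff ℝ l₁.length F) : l₁.foldr pD F = l₂.foldr pD F := by
  induction h with
  | nil => rfl
  | cons i _ ih => rw [List.foldr_cons, List.foldr_cons, ih (hF.of_le (by simp))]
  | swap i j l =>
    refine pD_comm (contDiff_foldr_pD l ?_) j i
    rwa [List.length_cons, List.length_cons, add_assoc, add_comm] at hF
  | trans h₁ _ ih₁ ih₂ => rw [ih₁ hF, ih₂ (h₁.length_eq ▸ hF)]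

theorem foldr_pD_ofFn {j : ℕ} (r : Fin j → Fin n) {F : Euc n → ℝ} (hF : ContDiff ℝ j F)
    (x : Euc n) : (List.ofFn r).foldr pD F x =
      iteratedFDeriv ℝ j F x fun i => EuclideanSpace.single (r i) 1 := by
  induction j generalizing x with
  | zero => simp
  | succ j ih =>
    have htail : (List.ofFn fun i => r i.succ).foldr pD F =
        fun y => iteratedFDeriv ℝ j F y fun i => EuclideanSpace.single (r i.succ) 1 :=
      funext fun y => ih _ (hF.of_le (by norm_cast; omega)) y
    have hdiff : DifferentiableAt ℝ (iteratedFDeriv ℝ j F) x :=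
      hF.differentiable_iteratedFDeriv (by norm_cast; omega) x
    rw [List.ofFn_succ, List.foldr_cons, htail, iteratedFDeriv_succ_apply_left, pD,
      fderiv_continuousMultilinear_apply_const_apply hdiff]
    rfl

/-- The indices of the variables in which `∂^α` differentiates, each `i` listed `α i` times, in
the order used by `mD`. -/
def multiIndexList (α : Fin n → ℕ) : List (Fin n) :=
  (List.finRange n).flatMap fun i => List.replicate (α i) i

theorem length_multiIndexList (α : Fin n → ℕ) : (multiIndexList α).length = deg α := by
  simp [multiIndexList, deg, List.length_flatMap, Fin.sum_univ_def]

theorem count_multiIndexList (α : Fin n → ℕ) (i : Fin n) : (multiIndexList α).count i = α i := by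
  simp only [multiIndexList, List.count_flatMap, Function.comp_def, List.count_replicate,
    ← Fin.sum_univ_def, beq_iff_eq, Finset.sum_ite_eq', Finset.mem_univ, if_true]

theorem exists_mD_eq_iteratedFDeriv (α : Fin n → ℕ) :
    ∃ r : Fin (deg α) → Fin n, ∀ F : Euc n → ℝ, ContDiff ℝ (deg α) F → ∀ x,
      mD α F x = iteratedFDeriv ℝ (deg α) F x fun i => EuclideanSpace.single (r i) 1 := by
  obtain ⟨r, hr⟩ : ∃ r : Fin (deg α) → Fin n, List.ofFn r = multiIndexList α :=
    length_multiIndexList α ▸ ⟨_, List.ofFn_get _⟩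
  refine ⟨r, fun F hF x => ?_⟩
  rw [← foldr_pD_ofFn r hF x, hr]
  rfl

theorem exists_iteratedFDeriv_eq_mD {j : ℕ} (r : Fin j → Fin n) :
    ∃ α : Fin n → ℕ, deg α = j ∧ ∀ F : Euc n → ℝ, ContDiff ℝ j F → ∀ x,
      iteratedFDeriv ℝ j F x (fun i => EuclideanSpace.single (r i) 1) = mD α F x := by
  let α : Fin n → ℕ := fun i => (List.ofFn r).count i
  have hperm : (List.ofFn r).Perm (multiIndexList α) :=
    List.perm_iff_count.mpr fun i => (count_multiIndexList α i).symm
  refine ⟨α, ?_, fun F hF x => ?_⟩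
  · rw [← length_multiIndexList, ← hperm.length_eq, List.length_ofFn]
  · rw [← foldr_pD_ofFn r hF x, foldr_pD_perm hperm (by rwa [List.length_ofFn])]
    rfl

theorem abs_mD_le {F : Euc n → ℝ} (α : Fin n → ℕ) (hF : ContDiff ℝ (deg α) F) (x : Euc n) :
    |mD α F x| ≤ ‖iteratedFDeriv ℝ (deg α) F x‖ := by
  obtain ⟨r, hr⟩ := exists_mD_eq_iteratedFDeriv α
  rw [hr F hF x, ← Real.norm_eq_abs]
  simpa using (iteratedFDeriv ℝ (deg α) F x).le_opNorm fun i => EuclideanSpace.single (r i) 1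

theorem norm_iteratedFDeriv_le_of_abs_mD_le {j : ℕ} {F : Euc n → ℝ} {x : Euc n} {B : ℝ}
    (hF : ContDiff ℝ j F) (hB : ∀ α : Fin n → ℕ, deg α = j → |mD α F x| ≤ B) :
    ‖iteratedFDeriv ℝ j F x‖ ≤ n ^ j * B := by
  calc ‖iteratedFDeriv ℝ j F x‖
      ≤ ∑ r : Fin j → Fin n,
          ‖iteratedFDeriv ℝ j F x fun i => EuclideanSpace.basisFun (Fin n) ℝ (r i)‖ :=
        opNorm_le_sum_norm_apply_orthonormalBasis _ _
    _ ≤ ∑ _r : Fin j → Fin n, B := by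
        refine Finset.sum_le_sum fun r _ => ?_
        obtain ⟨α, hα, hr⟩ := exists_iteratedFDeriv_eq_mD r
        simpa only [EuclideanSpace.basisFun_apply, hr F hF x, Real.norm_eq_abs] using hB α hα
    _ = n ^ j * B := by simp

theorem jetEq_iff_mD_eq {m : ℕ} {F G : Euc n → ℝ} {x : Euc n} (hF : ContDiff ℝ m F)
    (hG : ContDiff ℝ m G) :
    JetEq m F G x ↔ ∀ α : Fin n → ℕ, deg α < m → mD α F x = mD α G x := by
  constructor
  · intro h α hα
    have hαm : (deg α : WithTop ℕ∞) ≤ m := by exact_mod_cast hα.le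
    obtain ⟨r, hr⟩ := exists_mD_eq_iteratedFDeriv α
    rw [hr F (hF.of_le hαm), hr G (hG.of_le hαm), h _ hα]
  · intro h j hj
    have hjm : (j : WithTop ℕ∞) ≤ m := by exact_mod_cast hj.le
    refine sub_eq_zero.mp (norm_le_zero_iff.mp
      ((opNorm_le_sum_norm_apply_orthonormalBasis (EuclideanSpace.basisFun (Fin n) ℝ) _).trans_eq
        (Finset.sum_eq_zero fun r _ => ?_)))
    obtain ⟨α, rfl, hr⟩ := exists_iteratedFDeriv_eq_mD r
    simp [hr F (hF.of_le hjm), hr G (hG.of_le hjm), h α hj]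

theorem mD_add (α : Fin n → ℕ) {F G : Euc n → ℝ} (hF : ContDiff ℝ (deg α) F)
    (hG : ContDiff ℝ (deg α) G) (x : Euc n) : mD α (F + G) x = mD α F x + mD α G x := by
  obtain ⟨r, hr⟩ := exists_mD_eq_iteratedFDeriv α
  rw [hr (F + G) (hF.add hG), hr F hF, hr G hG,
    iteratedFDeriv_add_apply hF.contDiffAt hG.contDiffAt]
  rfl

theorem mD_const_smul (α : Fin n → ℕ) (a : ℝ) {F : Euc n → ℝ} (hF : ContDiff ℝ (deg α) F)
    (x : Euc n) : mD α (a • F) x = a * mD α F x := by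
  obtain ⟨r, hr⟩ := exists_mD_eq_iteratedFDeriv α
  rw [hr (a • F) (hF.const_smul a), hr F hF, iteratedFDeriv_const_smul_apply hF.contDiffAt]
  rfl

end MultiIndex

namespace CmNormLe

variable {m n : ℕ} {F G : Euc n → ℝ} {M N : ℝ}

theorem contDiff (hF : CmNormLe m n F M) : ContDiff ℝ m F := by exact_mod_cast hF.1

theorem mono (hF : CmNormLe m n F M) (hMN : M ≤ N) : CmNormLe m n F N :=
  ⟨hF.1, fun α hα x => (hF.2 α hα x).trans hMN⟩

theorem of_norm_iteratedFDeriv_le (hF : ContDiff ℝ m F)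
    (hM : ∀ j ≤ m, ∀ x, ‖iteratedFDeriv ℝ j F x‖ ≤ M) : CmNormLe m n F M :=
  ⟨by exact_mod_cast hF, fun α hα x =>
    (abs_mD_le α (hF.of_le (by exact_mod_cast hα)) x).trans (hM _ hα x)⟩

theorem add (hF : CmNormLe m n F M) (hG : CmNormLe m n G N) : CmNormLe m n (F + G) (M + N) :=
  ⟨hF.1.add hG.1, fun α hα x => by
    rw [mD_add α (hF.contDiff.of_le (by exact_mod_cast hα))
      (hG.contDiff.of_le (by exact_mod_cast hα))]
    exact (abs_add_le _ _).trans (add_le_add (hF.2 α hα x) (hG.2 α hα x))⟩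

theorem const_smul (hF : CmNormLe m n F M) (a : ℝ) : CmNormLe m n (a • F) (|a| * M) :=
  ⟨hF.1.const_smul a, fun α hα x => by
    rw [mD_const_smul α a (hF.contDiff.of_le (by exact_mod_cast hα)), abs_mul]
    exact mul_le_mul_of_nonneg_left (hF.2 α hα x) (abs_nonneg a)⟩

theorem sub (hF : CmNormLe m n F M) (hG : CmNormLe m n G N) : CmNormLe m n (F - G) (M + N) := by
  simpa [sub_eq_add_neg] using hF.add (hG.const_smul (-1))

end CmNormLe

/-! ### Polynomials and their jets -/

theorem eval_smul_of_isHomogeneous {σ R : Type*} [CommSemiring R] {P : MvPolynomial σ R} {e : ℕ}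
    (hP : P.IsHomogeneous e) (a : R) (z : σ → R) :
    MvPolynomial.eval (a • z) P = a ^ e * MvPolynomial.eval z P := by
  rw [MvPolynomial.eval_eq, MvPolynomial.eval_eq, Finset.mul_sum]
  refine Finset.sum_congr rfl fun s hs => ?_
  have hdegree : ∑ i ∈ s.support, s i = e := by
    rw [← Finsupp.degree_apply, Finsupp.degree_eq_weight_one]
    exact hP (MvPolynomial.mem_support_iff.mp hs)
  simp only [Pi.smul_apply, smul_eq_mul, mul_pow, Finset.prod_mul_distrib,
    Finset.prod_pow_eq_pow_sum, hdegree]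
  ring

theorem totalDegree_aeval_le {σ τ R : Type*} [CommSemiring R] {g : σ → MvPolynomial τ R}
    (hg : ∀ i, (g i).totalDegree ≤ 1) (P : MvPolynomial σ R) :
    (MvPolynomial.aeval g P).totalDegree ≤ P.totalDegree := by
  rw [MvPolynomial.aeval_def, MvPolynomial.eval₂_eq]
  refine MvPolynomial.totalDegree_finsetSum_le fun s hs => ?_
  calc _ ≤ 0 + ∑ i ∈ s.support, s i := by
        refine (MvPolynomial.totalDegree_mul _ _).trans (add_le_add ?_ ?_)
        · exact (MvPolynomial.totalDegree_C _).le
        · refine (MvPolynomial.totalDegree_finsetProd _ _).trans (Finset.sum_le_sum fun i _ => ?_)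
          exact (MvPolynomial.totalDegree_pow _ _).trans (mul_le_of_le_one_right' (hg i))
    _ ≤ P.totalDegree := (zero_add _).trans_le (MvPolynomial.le_totalDegree hs)

section Polynomials

variable {n : ℕ}

theorem peval_zero : peval (0 : MPoly n) = 0 := funext fun _ => map_zero _

theorem peval_one : peval (1 : MPoly n) = 1 := funext fun _ => map_one _

theorem peval_add (P Q : MPoly n) : peval (P + Q) = peval P + peval Q :=
  funext fun _ => map_add _ P Q

theorem peval_sub (P Q : MPoly n) : peval (P - Q) = peval P - peval Q :=
  funext fun _ => map_sub _ P Q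

theorem peval_mul (P Q : MPoly n) : peval (P * Q) = peval P * peval Q :=
  funext fun _ => map_mul _ P Q

theorem peval_smul (a : ℝ) (P : MPoly n) : peval (a • P) = a • peval P :=
  funext fun _ => MvPolynomial.smul_eval _ P a

theorem contDiff_peval {k : WithTop ℕ∞} (P : MPoly n) : ContDiff ℝ k (peval P) := by
  induction P using MvPolynomial.induction_on with
  | C a =>
    have hconst : peval (MvPolynomial.C a : MPoly n) = fun _ => a :=
      funext fun _ => MvPolynomial.eval_C a
    exact hconst ▸ contDiff_const
  | add P Q hP hQ => exact peval_add P Q ▸ hP.add hQ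
  | mul_X P i hP =>
    have hcoord : peval (MvPolynomial.X i : MPoly n) = EuclideanSpace.proj (𝕜 := ℝ) i :=
      funext fun _ => MvPolynomial.eval_X i
    exact peval_mul P _ ▸ hP.mul (hcoord ▸ ContinuousLinearMap.contDiff _)

theorem peval_smul_of_isHomogeneous {P : MPoly n} {e : ℕ} (hP : P.IsHomogeneous e) (a : ℝ)
    (z : Euc n) : peval P (a • z) = a ^ e * peval P z :=
  eval_smul_of_isHomogeneous hP a fun i => z i

-- Comparing `P(2z)` with `2^e P(z)` gives `2^j D^j P(0) = 2^e D^j P(0)`.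
theorem iteratedFDeriv_peval_zero_of_isHomogeneous {P : MPoly n} {e j : ℕ}
    (hP : P.IsHomogeneous e) (hj : j ≠ e) : iteratedFDeriv ℝ j (peval P) 0 = 0 := by
  have hscale : (fun z => peval P ((2 : ℝ) • z)) = (2 : ℝ) ^ e • peval P :=
    funext (peval_smul_of_isHomogeneous hP 2)
  have hderiv : (2 : ℝ) ^ j • iteratedFDeriv ℝ j (peval P) 0 =
      (2 : ℝ) ^ e • iteratedFDeriv ℝ j (peval P) 0 := by
    calc (2 : ℝ) ^ j • iteratedFDeriv ℝ j (peval P) 0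
        = iteratedFDeriv ℝ j (fun z => peval P ((2 : ℝ) • z)) 0 := by
          simp only [iteratedFDeriv_comp_const_smul 2 (contDiff_peval P), smul_zero]
      _ = (2 : ℝ) ^ e • iteratedFDeriv ℝ j (peval P) 0 := by
          rw [hscale, iteratedFDeriv_const_smul_apply (contDiff_peval P).contDiffAt]
  rw [← sub_eq_zero, ← sub_smul, smul_eq_zero, sub_eq_zero] at hderiv
  exact hderiv.resolve_left fun h =>
    hj (pow_right_injective₀ (by norm_num) (by norm_num) h)

theorem iteratedFDeriv_peval_zero (j : ℕ) (P : MPoly n) :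
    iteratedFDeriv ℝ j (peval P) 0 =
      iteratedFDeriv ℝ j (peval (MvPolynomial.homogeneousComponent j P)) 0 := by
  have hsum : peval P = fun z => ∑ i ∈ Finset.range (P.totalDegree + 1),
      peval (MvPolynomial.homogeneousComponent i P) z := by
    funext z
    conv_lhs => rw [← MvPolynomial.sum_homogeneousComponent P]
    exact map_sum _ _ _
  conv_lhs => rw [hsum]
  rw [iteratedFDeriv_fun_sum_apply fun i _ => (contDiff_peval _).contDiffAt]
  refine Finset.sum_eq_single j (fun i _ hij => ?_) fun hj => ?_
  · exact iteratedFDeriv_peval_zero_of_isHomogeneous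
      (MvPolynomial.homogeneousComponent_isHomogeneous i P) hij.symm
  · rw [MvPolynomial.homogeneousComponent_eq_zero j P (by simpa using hj),
      peval_zero, iteratedFDeriv_zero, Pi.zero_apply]

theorem peval_polyShift (v y : Euc n) (P : MPoly n) :
    peval (polyShift (fun i => v i) P) y = peval P (y + v) := by
  induction P using MvPolynomial.induction_on with
  | C a => simp [peval, polyShift]
  | add P Q hP hQ => simp_all [peval, polyShift]
  | mul_X P i hP => simp_all [peval, polyShift]

theorem totalDegree_polyShift_le (v : Fin n → ℝ) (P : MPoly n) :
    (polyShift v P).totalDegree ≤ P.totalDegree :=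
  totalDegree_aeval_le (fun i => (MvPolynomial.totalDegree_add _ _).trans (by simp)) P

theorem iteratedFDeriv_peval_eq_zero {P : MPoly n} {j : ℕ} (hj : P.totalDegree < j) (x : Euc n) :
    iteratedFDeriv ℝ j (peval P) x = 0 := by
  have hdegree : (polyShift (fun i => x i) P).totalDegree < j :=
    (totalDegree_polyShift_le _ P).trans_lt hj
  calc iteratedFDeriv ℝ j (peval P) x
      = iteratedFDeriv ℝ j (fun z => peval P (z + x)) 0 := by
        rw [iteratedFDeriv_comp_add_right, zero_add]
    _ = iteratedFDeriv ℝ j (peval (polyShift (fun i => x i) P)) 0 := by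
        simp only [← peval_polyShift]
    _ = 0 := by
        rw [iteratedFDeriv_peval_zero, MvPolynomial.homogeneousComponent_eq_zero _ _ hdegree,
          peval_zero, iteratedFDeriv_zero, Pi.zero_apply]

theorem coeff_truncLE (d : ℕ) (P : MPoly n) (s : Fin n →₀ ℕ) :
    (truncLE d P).coeff s = if s.degree ≤ d then P.coeff s else 0 := by
  simp only [truncLE, MvPolynomial.coeff_sum, MvPolynomial.coeff_monomial, Finset.sum_ite_eq',
    Finset.mem_filter, MvPolynomial.mem_support_iff]
  change (if _ ∧ s.degree ≤ d then _ else _) = _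
  grind

theorem totalDegree_truncLE_le (d : ℕ) (P : MPoly n) : (truncLE d P).totalDegree ≤ d :=
  MvPolynomial.totalDegree_finsetSum_le fun _ hs =>
    (MvPolynomial.totalDegree_monomial_le _ _).trans (Finset.mem_filter.mp hs).2

theorem homogeneousComponent_truncLE {j d : ℕ} (hj : j ≤ d) (P : MPoly n) :
    MvPolynomial.homogeneousComponent j (truncLE d P) =
      MvPolynomial.homogeneousComponent j P := by
  ext s
  rw [MvPolynomial.coeff_homogeneousComponent, MvPolynomial.coeff_homogeneousComponent,
    coeff_truncLE]
  grind

variable {m : ℕ} {x : Euc n}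

theorem jetEq_peval_jetTrunc (P : MPoly n) :
    JetEq m (peval (jetTrunc m n x P)) (peval P) x := by
  set R := polyShift (fun i => x i) P
  have htrunc : JetEq m (peval (truncLE (m - 1) R)) (peval R) (x - x) := fun j hj => by
    rw [sub_self, iteratedFDeriv_peval_zero, homogeneousComponent_truncLE (Nat.le_sub_one_of_lt hj),
      ← iteratedFDeriv_peval_zero]
  convert htrunc.comp_sub using 1
  · exact funext fun y => peval_polyShift (-x) y _
  · funext y
    rw [peval_polyShift, sub_add_cancel]

theorem totalDegree_jmul_le (P Q : MPoly n) : (jmul m n x P Q).totalDegree ≤ m - 1 :=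
  (totalDegree_polyShift_le _ _).trans (totalDegree_truncLE_le _ _)

theorem jetEq_peval_jmul (P Q : MPoly n) :
    JetEq m (peval (jmul m n x P Q)) (peval P * peval Q) x :=
  peval_mul P Q ▸ jetEq_peval_jetTrunc (P * Q)

theorem peval_jmul_apply_self (hm : 0 < m) (P Q : MPoly n) :
    peval (jmul m n x P Q) x = peval P x * peval Q x :=
  (jetEq_peval_jmul P Q).apply_eq hm

theorem isJetAt_iff (hm : 0 < m) {F : Euc n → ℝ} (hF : ContDiff ℝ m F) {P : MPoly n} :
    IsJetAt m n F x P ↔ P.totalDegree ≤ m - 1 ∧ JetEq m (peval P) F x := by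
  rw [jetEq_iff_mD_eq (contDiff_peval P) hF]
  simp only [IsJetAt, Nat.le_sub_one_iff_lt hm]

end Polynomials

/-! ### The shape field -/

/-- A `(C, δmax)`-convex shape field on `E`: polynomial sets `Γ x M`, convex and increasing in `M`,
such that if `P₁` and `P₂` are close at a scale `δ ≤ δmax` and `Q₁`, `Q₂` vary at that scale, then
the average `Q₁²P₁ + Q₂²P₂` of jets at `x` costs at most a factor `C` in `M`. -/
structure IsConvexShapeField (m n : ℕ) (E : Set (Euc n)) (Γ : Euc n → ℝ → Set (MPoly n))
    (C δmax : ℝ) : Prop where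
  convex : ∀ x ∈ E, ∀ M : ℝ, 0 < M → Convex ℝ (Γ x M)
  mono : ∀ x ∈ E, ∀ M' M : ℝ, 0 < M' → M' ≤ M → Γ x M' ⊆ Γ x M
  jmul_add_jmul_mem : ∀ δ : ℝ, 0 < δ → δ ≤ δmax → ∀ x ∈ E, ∀ M : ℝ, 0 < M →
    ∀ P₁ ∈ Γ x M, ∀ P₂ ∈ Γ x M,
    (∀ β : Fin n → ℕ, deg β ≤ m - 1 → |mD β (peval (P₁ - P₂)) x| ≤ M * δ ^ (m - deg β)) →
    ∀ Q₁ Q₂ : MPoly n, Q₁.totalDegree ≤ m - 1 → Q₂.totalDegree ≤ m - 1 →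
    (∀ β : Fin n → ℕ, deg β ≤ m - 1 →
      |mD β (peval Q₁) x| ≤ δ ^ (-(deg β : ℤ)) ∧ |mD β (peval Q₂) x| ≤ δ ^ (-(deg β : ℤ))) →
    jmul m n x Q₁ Q₁ + jmul m n x Q₂ Q₂ = 1 →
    jmul m n x (jmul m n x Q₁ Q₁) P₁ + jmul m n x (jmul m n x Q₂ Q₂) P₂ ∈ Γ x (C * M)

section ShapeField

variable {m n : ℕ} {x y : Euc n} {δ M : ℝ} {f F₁ F₂ : Euc n → ℝ} {P P₁ P₂ Q Q₁ Q₂ S₁ S₂ : MPoly n}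

theorem mem_GammaF_iff (hm : 0 < m) : P ∈ GammaF m n f x M ↔
    P.totalDegree ≤ m - 1 ∧ peval P x = f x ∧
      ∃ F, CmNormLe m n F M ∧ (∀ y, 0 ≤ F y) ∧ JetEq m (peval P) F x := by
  constructor
  · rintro ⟨⟨F, hF, hF0, hFP⟩, hPx⟩
    obtain ⟨hP, hPF⟩ := (isJetAt_iff hm hF.contDiff).mp hFP
    exact ⟨hP, hPx, F, hF, hF0, hPF⟩
  · rintro ⟨hP, hPx, F, hF, hF0, hPF⟩
    exact ⟨⟨F, hF, hF0, (isJetAt_iff hm hF.contDiff).mpr ⟨hP, hPF⟩⟩, hPx⟩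

theorem GammaF_mono {M' : ℝ} (hM : M' ≤ M) : GammaF m n f x M' ⊆ GammaF m n f x M := by
  rintro P ⟨⟨F, hF, hFP⟩, hPx⟩
  exact ⟨⟨F, hF.mono hM, hFP⟩, hPx⟩

theorem convex_GammaF (hm : 0 < m) : Convex ℝ (GammaF m n f x M) := by
  intro P hP Q hQ a b ha hb hab
  obtain ⟨hdP, hPx, F, hF, hF0, hPF⟩ := (mem_GammaF_iff hm).mp hP
  obtain ⟨hdQ, hQx, G, hG, hG0, hQG⟩ := (mem_GammaF_iff hm).mp hQ
  refine (mem_GammaF_iff hm).mpr ⟨?_, ?_, a • F + b • G, ?_, fun y => ?_, ?_⟩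
  · exact (MvPolynomial.totalDegree_add _ _).trans (max_le
      ((MvPolynomial.totalDegree_smul_le _ _).trans hdP)
      ((MvPolynomial.totalDegree_smul_le _ _).trans hdQ))
  · rw [peval_add, peval_smul, peval_smul]
    simp only [Pi.add_apply, Pi.smul_apply, smul_eq_mul, hPx, hQx, ← add_mul, hab, one_mul]
  · simpa only [abs_of_nonneg ha, abs_of_nonneg hb, ← add_mul, hab, one_mul] using
      (hF.const_smul a).add (hG.const_smul b)
  · exact add_nonneg (mul_nonneg ha (hF0 y)) (mul_nonneg hb (hG0 y))
  · rw [peval_add, peval_smul, peval_smul]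
    exact (hPF.const_smul a (contDiff_peval P) hF.contDiff).add
      (hQG.const_smul b (contDiff_peval Q) hG.contDiff)
      ((contDiff_peval P).const_smul a) (hF.contDiff.const_smul a)
      ((contDiff_peval Q).const_smul b) (hG.contDiff.const_smul b)

theorem ScaledCmBound.of_abs_mD_le {F : Euc n → ℝ} {B : ℝ} (hδ : 0 < δ) (hB : 0 ≤ B)
    (hF : ContDiff ℝ m F)
    (hcenter : ∀ β : Fin n → ℕ, deg β < m → |mD β F x| ≤ B * δ⁻¹ ^ deg β)
    (htop : ∀ z, ∀ β : Fin n → ℕ, deg β = m → |mD β F z| ≤ B * δ⁻¹ ^ m)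
    (hy : y ∈ Metric.closedBall x δ) : ScaledCmBound m δ ((n + 1) ^ m * B * (m + 1)) F y := by
  have hpow {j : ℕ} (hj : j ≤ m) :
      n ^ j * (B * δ⁻¹ ^ j) ≤ (n + 1) ^ m * B * δ⁻¹ ^ j := by
    rw [← mul_assoc]
    gcongr
    exact_mod_cast (Nat.pow_le_pow_left n.le_succ j).trans (Nat.pow_le_pow_right n.succ_pos hj)
  refine .of_center hδ hF (fun j hj => ?_) (fun z _ => ?_) hy
  · exact (norm_iteratedFDeriv_le_of_abs_mD_le (hF.of_le (by exact_mod_cast hj.le))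
      fun β hβ => hβ ▸ hcenter β (hβ ▸ hj)).trans (hpow hj.le)
  · exact (norm_iteratedFDeriv_le_of_abs_mD_le hF (htop z)).trans (hpow le_rfl)

theorem scaledCmBound_peval (hδ : 0 < δ) (hQ : Q.totalDegree < m)
    (hQx : ∀ β : Fin n → ℕ, deg β < m → |mD β (peval Q) x| ≤ δ⁻¹ ^ deg β)
    (hy : y ∈ Metric.closedBall x δ) :
    ScaledCmBound m δ ((n + 1) ^ m * 1 * (m + 1)) (peval Q) y := by
  refine .of_abs_mD_le hδ zero_le_one (contDiff_peval Q) (by simpa only [one_mul] using hQx)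
    (fun z β hβ => (abs_mD_le β (contDiff_peval Q) z).trans ?_) hy
  rw [hβ, iteratedFDeriv_peval_eq_zero hQ, norm_zero]
  positivity

theorem CmNormLe.scaledCmBound_sub (hδ : 0 < δ) (hM : 0 ≤ M) (hF₁ : CmNormLe m n F₁ M)
    (hF₂ : CmNormLe m n F₂ M)
    (hx : ∀ β : Fin n → ℕ, deg β < m → |mD β (F₁ - F₂) x| ≤ M * δ ^ (m - deg β))
    (hy : y ∈ Metric.closedBall x δ) :
    ScaledCmBound m δ ((n + 1) ^ m * (2 * M * δ ^ m) * (m + 1)) (F₁ - F₂) y := by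
  have hscale {j : ℕ} (hj : j ≤ m) : 2 * M * δ ^ m * δ⁻¹ ^ j = (M + M) * δ ^ (m - j) := by
    rw [pow_sub₀ δ hδ.ne' hj, inv_pow]
    ring
  refine .of_abs_mD_le hδ (by positivity) (hF₁.sub hF₂).contDiff (fun β hβ => ?_)
    (fun z β hβ => ?_) hy
  · rw [hscale hβ.le]
    exact (hx β hβ).trans (by gcongr; linarith)
  · simpa only [hscale le_rfl, Nat.sub_self, pow_zero, mul_one] using (hF₁.sub hF₂).2 β hβ.le z

theorem CmNormLe.add_cutoff_mul_sub {K : ℝ} {θ : Euc n → ℝ} (hδ : 0 < δ) (hδ1 : δ ≤ 1)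
    (hM : 0 ≤ M) (hF₁ : CmNormLe m n F₁ M) (hF₂ : CmNormLe m n F₂ M)
    (hx : ∀ β : Fin n → ℕ, deg β < m → |mD β (F₁ - F₂) x| ≤ M * δ ^ (m - deg β))
    (hθ : IsScaledCutoff m δ K x θ) :
    CmNormLe m n (F₂ + θ * (F₁ - F₂)) ((1 + 2 ^ (m + 1) * K * (n + 1) ^ m * (m + 1)) * M) := by
  have hsub : ContDiff ℝ m (F₁ - F₂) := (hF₁.sub hF₂).contDiff
  have hglue : CmNormLe m n (θ * (F₁ - F₂)) (2 ^ m * K * ((n + 1) ^ m * (2 * M) * (m + 1))) :=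
    .of_norm_iteratedFDeriv_le (hθ.contDiff.mul hsub) fun j hj =>
      hθ.norm_iteratedFDeriv_mul_le hδ hδ1 hsub (fun y hy => by
        convert CmNormLe.scaledCmBound_sub hδ hM hF₁ hF₂ hx hy using 1
        ring) hj
  convert hF₂.add hglue using 1
  ring

-- On jets, `S₁P₁ + S₂P₂ = P₂ + S₁(P₁ - P₂)`, as `S₁ + S₂ = 1`.
theorem jetEq_peval_jmul_add_jmul {θ : Euc n → ℝ} (hS : S₁ + S₂ = 1) (hθ : ContDiff ℝ m θ)
    (hF₁ : ContDiff ℝ m F₁) (hF₂ : ContDiff ℝ m F₂) (hSθ : JetEq m (peval S₁) θ x)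
    (hPF₁ : JetEq m (peval P₁) F₁ x) (hPF₂ : JetEq m (peval P₂) F₂ x) :
    JetEq m (peval (jmul m n x S₁ P₁ + jmul m n x S₂ P₂)) (F₂ + θ * (F₁ - F₂)) x := by
  have hpeval (R : MPoly n) : ContDiff ℝ m (peval R) := contDiff_peval R
  have hjmul : JetEq m (peval (jmul m n x S₁ P₁ + jmul m n x S₂ P₂))
      (peval S₁ * peval P₁ + peval S₂ * peval P₂) x := by
    rw [peval_add]
    exact (jetEq_peval_jmul S₁ P₁).add (jetEq_peval_jmul S₂ P₂) (hpeval _)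
      ((hpeval _).mul (hpeval _)) (hpeval _) ((hpeval _).mul (hpeval _))
  have hrewrite : peval S₁ * peval P₁ + peval S₂ * peval P₂ =
      peval P₂ + peval S₁ * (peval P₁ - peval P₂) := by
    rw [eq_sub_of_add_eq' hS, peval_sub, peval_one]
    ring
  have hsub : JetEq m (peval P₁ - peval P₂) (F₁ - F₂) x :=
    hPF₁.sub hPF₂ (hpeval _) hF₁ (hpeval _) hF₂
  refine hjmul.trans (hrewrite ▸ ?_)
  exact hPF₂.add (hSθ.mul hsub (hpeval _) hθ ((hpeval _).sub (hpeval _)) (hF₁.sub hF₂))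
    (hpeval _) hF₂ ((hpeval _).mul ((hpeval _).sub (hpeval _))) (hθ.mul (hF₁.sub hF₂))

theorem jmul_add_jmul_mem_GammaF {K : ℝ} {θ : Euc n → ℝ} (hm : 0 < m) (hδ : 0 < δ) (hδ1 : δ ≤ 1)
    (hM : 0 ≤ M) (hP₁ : P₁ ∈ GammaF m n f x M) (hP₂ : P₂ ∈ GammaF m n f x M)
    (hP : ∀ β : Fin n → ℕ, deg β < m → |mD β (peval (P₁ - P₂)) x| ≤ M * δ ^ (m - deg β))
    (hS : S₁ + S₂ = 1) (hθ : IsScaledCutoff m δ K x θ) (hSθ : JetEq m (peval S₁) θ x) :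
    jmul m n x S₁ P₁ + jmul m n x S₂ P₂ ∈
      GammaF m n f x ((1 + 2 ^ (m + 1) * K * (n + 1) ^ m * (m + 1)) * M) := by
  obtain ⟨-, hP₁x, F₁, hF₁, hF₁0, hPF₁⟩ := (mem_GammaF_iff hm).mp hP₁
  obtain ⟨-, hP₂x, F₂, hF₂, hF₂0, hPF₂⟩ := (mem_GammaF_iff hm).mp hP₂
  have hdiff : ∀ β : Fin n → ℕ, deg β < m → |mD β (F₁ - F₂) x| ≤ M * δ ^ (m - deg β) := by
    have hjet : JetEq m (peval (P₁ - P₂)) (F₁ - F₂) x := peval_sub P₁ P₂ ▸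
      hPF₁.sub hPF₂ (contDiff_peval P₁) hF₁.contDiff (contDiff_peval P₂) hF₂.contDiff
    intro β hβ
    rw [← (jetEq_iff_mD_eq (contDiff_peval _) (hF₁.sub hF₂).contDiff).mp hjet β hβ]
    exact hP β hβ
  refine (mem_GammaF_iff hm).mpr ⟨?_, ?_, F₂ + θ * (F₁ - F₂),
    hF₁.add_cutoff_mul_sub hδ hδ1 hM hF₂ hdiff hθ, fun y => ?_,
    jetEq_peval_jmul_add_jmul hS hθ.contDiff hF₁.contDiff hF₂.contDiff hSθ hPF₁ hPF₂⟩
  · exact (MvPolynomial.totalDegree_add _ _).trans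
      (max_le (totalDegree_jmul_le _ _) (totalDegree_jmul_le _ _))
  · have hSx : peval S₁ x + peval S₂ x = 1 := by
      simpa only [peval_add, Pi.add_apply, peval_one, Pi.one_apply] using
        congrArg (fun R => peval R x) hS
    rw [peval_add, Pi.add_apply, peval_jmul_apply_self hm, peval_jmul_apply_self hm, hP₁x, hP₂x,
      ← add_mul, hSx, one_mul]
  · calc 0 ≤ (1 - θ y) * F₂ y + θ y * F₁ y :=
          add_nonneg (mul_nonneg (sub_nonneg.mpr (hθ.mem_Icc y).2) (hF₂0 y))
            (mul_nonneg (hθ.mem_Icc y).1 (hF₁0 y))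
      _ = (F₂ + θ * (F₁ - F₂)) y := by
          simp only [Pi.add_apply, Pi.mul_apply, Pi.sub_apply]
          ring

theorem exists_isScaledCutoff_jetEq_jmul_self (n : ℕ) (hm : 0 < m) :
    ∃ K : ℝ, ∀ (x : Euc n) (δ : ℝ), 0 < δ → ∀ Q : MPoly n, Q.totalDegree < m →
      (∀ β : Fin n → ℕ, deg β < m → |mD β (peval Q) x| ≤ δ⁻¹ ^ deg β) →
      peval Q x * peval Q x ≤ 1 / 2 →
      ∃ θ, IsScaledCutoff m δ K x θ ∧ JetEq m (peval (jmul m n x Q Q)) θ x := by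
  obtain ⟨K, hK⟩ := exists_isScaledCutoff_jetEq_sq (Euc n) hm
    (A := (n + 1) ^ m * 1 * (m + 1)) (by positivity)
  refine ⟨K, fun x δ hδ Q hQ hQx hhalf => ?_⟩
  obtain ⟨θ, hθ, hθQ⟩ := hK x δ hδ (peval Q) (contDiff_peval Q)
    (fun y hy => scaledCmBound_peval hδ hQ hQx hy) hhalf
  exact ⟨θ, hθ, (jetEq_peval_jmul Q Q).trans hθQ.symm⟩

end ShapeField

theorem GammaF_is_convex_shape_field_general (m n : ℕ) (hm : 0 < m) :
    ∃ C : ℝ, 0 < C ∧ ∀ (E : Set (Euc n)) (f : Euc n → ℝ),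
      IsConvexShapeField m n E (GammaF m n f) C 1 := by
  obtain ⟨K, hK⟩ := exists_isScaledCutoff_jetEq_jmul_self n hm
  set C : ℝ := 1 + 2 ^ (m + 1) * K * (n + 1) ^ m * (m + 1)
  refine ⟨max 1 C, by positivity, fun E f => ⟨fun x _ M _ => convex_GammaF hm,
    fun x _ M' M _ hM => GammaF_mono hM, ?_⟩⟩
  intro δ hδ hδ1 x _ M hM P₁ hP₁ P₂ hP₂ hP Q₁ Q₂ hQ₁ hQ₂ hQ hsum
  simp only [Nat.le_sub_one_iff_lt hm, zpow_neg, zpow_natCast, ← inv_pow] at hP hQ₁ hQ₂ hQ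
  refine GammaF_mono (mul_le_mul_of_nonneg_right (le_max_right 1 C) hM.le) ?_
  have hsumx : peval Q₁ x * peval Q₁ x + peval Q₂ x * peval Q₂ x = 1 := by
    simpa only [peval_add, Pi.add_apply, peval_jmul_apply_self hm, peval_one, Pi.one_apply] using
      congrArg (fun R => peval R x) hsum
  rcases le_total (peval Q₁ x * peval Q₁ x) (1 / 2) with hhalf | hhalf
  · obtain ⟨θ, hθ, hSθ⟩ := hK x δ hδ Q₁ hQ₁ (fun β hβ => (hQ β hβ).1) hhalf
    exact jmul_add_jmul_mem_GammaF hm hδ hδ1 hM.le hP₁ hP₂ hP hsum hθ hSθ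
  · obtain ⟨θ, hθ, hSθ⟩ := hK x δ hδ Q₂ hQ₂ (fun β hβ => (hQ β hβ).2) (by linarith)
    rw [add_comm] at hsum ⊢
    refine jmul_add_jmul_mem_GammaF hm hδ hδ1 hM.le hP₂ hP₁ (fun β hβ => ?_) hsum hθ hSθ
    have hneg : peval (P₂ - P₁) = (-1 : ℝ) • peval (P₁ - P₂) := by
      rw [← peval_smul, neg_one_smul, neg_sub]
    rw [hneg, mD_const_smul β (-1) (contDiff_peval _), abs_mul, abs_neg, abs_one, one_mul]
    exact hP β hβ

/-- **Lemma 2.1**: `Γ⃗_f` is a `(C,1)`-convex shape field. -/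
theorem GammaF_is_convex_shape_field (m n : ℕ) (hm : 0 < m) (hn : 0 < n) :
    ∃ C : ℝ, 0 < C ∧
      ∀ (E : Set (Euc n)), E.Finite → ∀ f : Euc n → ℝ, (∀ x ∈ E, 0 ≤ f x) →
        (∀ x ∈ E, ∀ M : ℝ, 0 < M → Convex ℝ (GammaF m n f x M)) ∧
        (∀ x ∈ E, ∀ M' M : ℝ, 0 < M' → M' ≤ M → GammaF m n f x M' ⊆ GammaF m n f x M) ∧
        (∀ δ : ℝ, 0 < δ → δ ≤ 1 → ∀ x ∈ E, ∀ M : ℝ, 0 < M →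
          ∀ P₁ ∈ GammaF m n f x M, ∀ P₂ ∈ GammaF m n f x M,
          (∀ β : Fin n → ℕ, deg β ≤ m - 1 →
            |mD β (peval (P₁ - P₂)) x| ≤ M * δ ^ (m - deg β)) →
          ∀ Q₁ Q₂ : MPoly n,
            MvPolynomial.totalDegree Q₁ ≤ m - 1 → MvPolynomial.totalDegree Q₂ ≤ m - 1 →
          (∀ β : Fin n → ℕ, deg β ≤ m - 1 →
            |mD β (peval Q₁) x| ≤ δ ^ (-(deg β : ℤ)) ∧
            |mD β (peval Q₂) x| ≤ δ ^ (-(deg β : ℤ))) →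
          jmul m n x Q₁ Q₁ + jmul m n x Q₂ Q₂ = 1 →
          jmul m n x (jmul m n x Q₁ Q₁) P₁ + jmul m n x (jmul m n x Q₂ Q₂) P₂
            ∈ GammaF m n f x (C * M)) := by
  obtain ⟨C, hC, h⟩ := GammaF_is_convex_shape_field_general m n hm
  exact ⟨C, hC, fun E _ f _ => ⟨(h E f).convex, (h E f).mono, (h E f).jmul_add_jmul_mem⟩⟩

end
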